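/- For every integer n ≥ 6, one has 16(n^5 + n^2 + 3n + 12)/n^5 < V_n/V_{n−1} < 16(n+1)/n. -/

import Mathlib

/-!
Dividing the recurrence by `V_{n-1}` gives `r_n = a_n - b_n / r_{n-1}` for the ratios
`r_n = V_n / V_{n-1}`, with `b_n > 0`. The right-hand side is increasing in `r_{n-1}`, so a lower
bound for `r_{n-1}` yields a lower bound for `r_n`, and an upper bound yields an upper bound. Both
claimed bounds are reproduced by this map for `n ≥ 7`: each step reduces to a polynomial
inequality in `n` whose coefficients become positive after writing `n = x + 7`. They hold at
`n = 6` by direct computation. The induction runs on the bounds with denominators cleared,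
together with the positivity of `V_{n-1}`.
-/

/-- The lower bound propagates: here `A, B, C` are `V_{n-2}, V_{n-1}, V_n`. -/
lemma lower_step (n A B C : ℝ) (hn : 7 ≤ n) (hB : 0 < B)
    (hrec : (n - 1) * n ^ 2 * C
      = 8 * (n - 1) * (3 * n ^ 2 - n - 1) * B - 128 * (n - 2) * n ^ 2 * A)
    (h : 16 * ((n - 1) ^ 5 + (n - 1) ^ 2 + 3 * (n - 1) + 12) * A < (n - 1) ^ 5 * B) :
    16 * (n ^ 5 + n ^ 2 + 3 * n + 12) * B < n ^ 5 * C := by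
  obtain ⟨x, rfl⟩ : ∃ x, n = x + 7 := ⟨n - 7, by ring⟩
  have hx : 0 ≤ x := by linarith
  set n := x + 7 with hnx
  set P := (n - 1) ^ 5 + (n - 1) ^ 2 + 3 * (n - 1) + 12 with hP
  have hn1 : 0 < n - 1 := by linarith
  have hn2 : 0 < n - 2 := by linarith
  have hPpos : 0 < P := by positivity
  have key : 0 < n ^ 3 * (8 * (n - 1) * (3 * n ^ 2 - n - 1) * P - 8 * (n - 2) * n ^ 2 * (n - 1) ^ 5)
      - 16 * (n - 1) * (n ^ 5 + n ^ 2 + 3 * n + 12) * P := by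
    rw [hP, hnx]
    ring_nf
    positivity
  have h1 := mul_pos key hB
  have h2 : 0 < 8 * (n - 2) * n ^ 5 * ((n - 1) ^ 5 * B - 16 * P * A) :=
    mul_pos (by positivity) (sub_pos.2 h)
  have h3 : 0 < ((n - 1) * P) * (n ^ 5 * C - 16 * (n ^ 5 + n ^ 2 + 3 * n + 12) * B) := by
    linear_combination h1 + h2 - n ^ 3 * P * hrec
  exact sub_pos.1 (pos_of_mul_pos_right h3 (by positivity))

/-- The upper bound propagates: here `A, B, C` are `V_{n-2}, V_{n-1}, V_n`. -/
lemma upper_step (n A B C : ℝ) (hn : 7 ≤ n) (hB : 0 < B)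
    (hrec : (n - 1) * n ^ 2 * C
      = 8 * (n - 1) * (3 * n ^ 2 - n - 1) * B - 128 * (n - 2) * n ^ 2 * A)
    (h : (n - 1) * B < 16 * n * A) :
    n * C < 16 * (n + 1) * B := by
  obtain ⟨x, rfl⟩ : ∃ x, n = x + 7 := ⟨n - 7, by ring⟩
  have hx : 0 ≤ x := by linarith
  set n := x + 7 with hnx
  have hn1 : 0 < n - 1 := by linarith
  have hn2 : 0 < n - 2 := by linarith
  have key : 0 < 16 * (n - 1) * n * (n + 1)
      - (8 * (n - 1) * (3 * n ^ 2 - n - 1) - 8 * (n - 2) * n * (n - 1)) := by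
    rw [hnx]
    ring_nf
    positivity
  have h1 := mul_pos key hB
  have h2 : 0 < 8 * (n - 2) * n * (16 * n * A - (n - 1) * B) :=
    mul_pos (by positivity) (sub_pos.2 h)
  have h3 : 0 < ((n - 1) * n) * (16 * (n + 1) * B - n * C) := by
    linear_combination h1 + h2 + hrec
  exact sub_pos.1 (pos_of_mul_pos_right h3 (by positivity))


/-- Bounds for the ratio `V_n / V_{n-1}` of the Fennessey-Larcombe-French
sequence, for `n ≥ 6`. -/
theorem stmt_6 (V : ℕ → ℝ) (hV0 : V 0 = 1) (hV1 : V 1 = 8)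
    (hrec : ∀ n : ℕ, 2 ≤ n →
      ((n : ℝ) - 1) * (n : ℝ) ^ 2 * V n =
        8 * ((n : ℝ) - 1) * (3 * (n : ℝ) ^ 2 - (n : ℝ) - 1) * V (n - 1)
          - 128 * ((n : ℝ) - 2) * (n : ℝ) ^ 2 * V (n - 2)) :
    ∀ n : ℕ, 6 ≤ n →
      16 * ((n : ℝ) ^ 5 + (n : ℝ) ^ 2 + 3 * (n : ℝ) + 12) / (n : ℝ) ^ 5 < V n / V (n - 1) ∧
        V n / V (n - 1) < 16 * ((n : ℝ) + 1) / (n : ℝ) := by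
  have V2 : V 2 = 144 := by
    have h := hrec 2 le_rfl
    norm_num [hV0, hV1] at h
    linarith
  have V3 : V 3 = 2432 := by
    have h := hrec 3 (by norm_num)
    norm_num [V2, hV1] at h
    linarith
  have V4 : V 4 = 40000 := by
    have h := hrec 4 (by norm_num)
    norm_num [V2, V3] at h
    linarith
  have V5 : V 5 = 649728 := by
    have h := hrec 5 (by norm_num)
    norm_num [V3, V4] at h
    linarith
  have V6 : V 6 = 10486784 := by
    have h := hrec 6 (by norm_num)
    norm_num [V4, V5] at h
    linarith
  have main : ∀ n : ℕ, 6 ≤ n → 0 < V (n - 1) ∧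
      16 * ((n : ℝ) ^ 5 + (n : ℝ) ^ 2 + 3 * (n : ℝ) + 12) * V (n - 1) < (n : ℝ) ^ 5 * V n ∧
        (n : ℝ) * V n < 16 * ((n : ℝ) + 1) * V (n - 1) := by
    intro n hn
    induction n, hn using Nat.le_induction with
    | base => norm_num [V5, V6]
    | succ n hn ih =>
      obtain ⟨hA, hlow, hup⟩ := ih
      have hn' : (6 : ℝ) ≤ n := by exact_mod_cast hn
      have hB : 0 < V n := by
        have h : 0 < (n : ℝ) ^ 5 * V n := lt_trans (by positivity) hlow
        exact pos_of_mul_pos_right h (by positivity)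
      have hr := hrec (n + 1) (by omega)
      rw [show n + 1 - 2 = n - 1 by omega] at hr
      simp only [Nat.add_sub_cancel] at hr ⊢
      refine ⟨hB, lower_step _ _ _ _ ?_ hB hr ?_, upper_step _ _ _ _ ?_ hB hr ?_⟩
      · push_cast; linarith
      · push_cast; simpa only [add_sub_cancel_right] using hlow
      · push_cast; linarith
      · push_cast; simpa only [add_sub_cancel_right] using hup
  intro n hn
  obtain ⟨hA, hlow, hup⟩ := main n hn
  have hn0 : (0 : ℝ) < n := by exact_mod_cast (by omega : 0 < n)
  constructor
  · rw [div_lt_div_iff₀ (by positivity) hA]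
    linarith
  · rw [div_lt_div_iff₀ hA hn0]
    linarith
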